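/- For all positive integers n and all nonnegative integers k, the number of partitions of n with nonnegative crank and exactly k parts that are not equal to 1 is equal to the number of partitions of n with odd mex and exactly k parts that are not equal to 1. -/

import Mathlib

/-- The number of parts equal to 1 in the partition `π`. -/
def partitionOmega {n : ℕ} (π : n.Partition) : ℕ := π.parts.count 1

/-- The number of parts of `π` strictly greater than the number of ones in `π`. -/
def partitionEta {n : ℕ} (π : n.Partition) : ℕ :=
  (π.parts.filter (fun p => partitionOmega π < p)).card

/-- The crank of a partition: the largest part if there are no ones,
and `η(π) - ω(π)` otherwise. -/
def partitionCrank {n : ℕ} (π : n.Partition) : ℤ :=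
  if partitionOmega π = 0 then (π.parts.sup : ℤ)
  else (partitionEta π : ℤ) - (partitionOmega π : ℤ)

/-- The mex of a partition: the least positive integer not occurring as a part. -/
noncomputable def partitionMex {n : ℕ} (π : n.Partition) : ℕ :=
  sInf {k : ℕ | 0 < k ∧ k ∉ π.parts}

/-- The number of parts of `π` that are not equal to 1, counted with multiplicity. -/
def nonOneParts {n : ℕ} (π : n.Partition) : ℕ :=
  (π.parts.filter (fun p => p ≠ 1)).card

/-!
A partition without ones has nonnegative crank and mex `1`, so only the partitions containing a `1`
matter; remove one `1` from each of them. For `j ≥ 1` consider two conditions on the partition `s`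
that remains: adjoining `j` ones to `s` gives crank greater than `-j`, and the least integer above
`j` missing from `s` has the parity of `j`. The case `j = 1` is the theorem.

Both conditions obey the same recurrence: the partitions of `m` with `k` parts different from `1`
failing the condition for `j + 1` are as many as the partitions of `m + j + 1` with `k + 1` such
parts satisfying it for `j`. For the mex, adjoin the part `j + 1`. For the crank, let `i` be the
number of ones; failure means that only `c ≤ i` parts exceed `i + j + 1`. Lower these by one, turn
the `i` ones into a part `i + j + 1`, and add `c` ones. By induction on `k` the recurrence
determines the counts.
-/

section MexAbove

/-- The mex of `s` relative to `j`: the least integer greater than `j` that does not occur in `s`.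
Varying `j` allows the mex to be computed by discarding the parts of `s` one after the other. -/
noncomputable def mexAbove (j : ℕ) (s : Multiset ℕ) : ℕ :=
  sInf {k | j < k ∧ k ∉ s}

theorem partitionMex_eq_mexAbove {n : ℕ} (π : n.Partition) :
    partitionMex π = mexAbove 0 π.parts :=
  rfl

theorem mexAbove_of_succ_notMem {j : ℕ} {s : Multiset ℕ} (h : j + 1 ∉ s) :
    mexAbove j s = j + 1 :=
  IsLeast.csInf_eq ⟨⟨j.lt_succ_self, h⟩, fun _ hk => hk.1⟩

theorem mexAbove_of_succ_mem {j : ℕ} {s : Multiset ℕ} (h : j + 1 ∈ s) :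
    mexAbove j s = mexAbove (j + 1) s := by
  refine congrArg sInf (Set.ext fun k => and_congr_left fun hk => ?_)
  have : k ≠ j + 1 := fun hkj => hk (hkj ▸ h)
  omega

theorem mexAbove_cons_of_le {j p : ℕ} (h : p ≤ j) (s : Multiset ℕ) :
    mexAbove j (p ::ₘ s) = mexAbove j s := by
  refine congrArg sInf (Set.ext fun k => and_congr_right fun hk => ?_)
  rw [Multiset.mem_cons, or_iff_right (by omega)]

theorem mexAbove_cons_succ (j : ℕ) (s : Multiset ℕ) :
    mexAbove j ((j + 1) ::ₘ s) = mexAbove (j + 1) s := by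
  rw [mexAbove_of_succ_mem (Multiset.mem_cons_self _ _), mexAbove_cons_of_le le_rfl]

theorem succ_mem_of_even_mexAbove_add {j : ℕ} {s : Multiset ℕ} (h : Even (mexAbove j s + j)) :
    j + 1 ∈ s := by
  by_contra hj
  rw [mexAbove_of_succ_notMem hj] at h
  grind

end MexAbove

section Pivot

variable {α : Type*} [LinearOrder α] {H L H' L' : Multiset α} {a a' : α}

theorem sort_cons_add (hH : ∀ p ∈ H, a ≤ p) (hL : ∀ p ∈ L, p ≤ a) :
    (a ::ₘ (H + L)).sort (· ≥ ·) = H.sort (· ≥ ·) ++ a :: L.sort (· ≥ ·) := by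
  refine List.Perm.eq_of_pairwise' (Multiset.pairwise_sort _ _) ?_ ?_
  · simp only [List.pairwise_append, List.pairwise_cons, Multiset.pairwise_sort, List.mem_cons,
      Multiset.mem_sort, true_and, and_true]
    refine ⟨hL, fun p hp q hq => ?_⟩
    rcases hq with rfl | hq
    exacts [hH p hp, (hL q hq).trans (hH p hp)]
  · rw [← Multiset.coe_eq_coe]
    simp [← Multiset.coe_add, ← Multiset.cons_coe]

theorem cons_add_inj_of_card_eq (hH : ∀ p ∈ H, a ≤ p) (hL : ∀ p ∈ L, p ≤ a)
    (hH' : ∀ p ∈ H', a' ≤ p) (hL' : ∀ p ∈ L', p ≤ a') (hcard : H.card = H'.card)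
    (h : a ::ₘ (H + L) = a' ::ₘ (H' + L')) : H = H' ∧ a = a' ∧ L = L' := by
  have hsort := congrArg (Multiset.sort · (· ≥ ·)) h
  simp only [sort_cons_add hH hL, sort_cons_add hH' hL'] at hsort
  obtain ⟨hupper, hrest⟩ := List.append_inj hsort (by simpa using hcard)
  obtain ⟨hpivot, hlower⟩ := List.cons.inj hrest
  exact ⟨by simpa using congrArg ((↑) : List α → Multiset α) hupper, hpivot,
    by simpa using congrArg ((↑) : List α → Multiset α) hlower⟩

theorem exists_eq_cons_add_of_lt_card {s : Multiset α} {c : ℕ} (hc : c < s.card) :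
    ∃ (H L : Multiset α) (a : α), s = a ::ₘ (H + L) ∧ H.card = c ∧
      (∀ p ∈ H, a ≤ p) ∧ ∀ p ∈ L, p ≤ a := by
  set l := s.sort (· ≥ ·) with hl
  have hlen : c < l.length := by simpa [hl] using hc
  have hsplit : l.take c ++ l[c] :: l.drop (c + 1) = l := by
    rw [← List.drop_eq_getElem_cons, List.take_append_drop]
  have hsorted : l.Pairwise (· ≥ ·) := Multiset.pairwise_sort _ _
  rw [← hsplit, List.pairwise_append, List.pairwise_cons] at hsorted
  obtain ⟨-, ⟨hlower, -⟩, hupper⟩ := hsorted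
  refine ⟨l.take c, l.drop (c + 1), l[c], ?_, by simp [hlen.le],
    fun p hp => hupper p hp _ List.mem_cons_self, hlower⟩
  rw [← Multiset.sort_eq s (· ≥ ·), ← hl, Multiset.coe_add, Multiset.cons_coe,
    Multiset.coe_eq_coe]
  conv_lhs => rw [← hsplit]
  exact List.perm_middle

theorem card_lt_card_filter_cons_add_iff (hH : ∀ p ∈ H, a ≤ p) (hL : ∀ p ∈ L, p ≤ a) (b : α) :
    H.card < ((a ::ₘ (H + L)).filter (b < ·)).card ↔ b < a := by
  by_cases hb : b < a
  · have hfilter : H.filter (b < ·) = H :=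
      Multiset.filter_eq_self.2 fun p hp => hb.trans_le (hH p hp)
    simp only [Multiset.filter_cons_of_pos _ hb, Multiset.filter_add, hfilter,
      Multiset.card_cons, Multiset.card_add, hb, iff_true]
    omega
  · have hfilter : L.filter (b < ·) = 0 :=
      Multiset.filter_eq_nil.2 fun p hp hbp => hb (hbp.trans_le (hL p hp))
    simpa only [Multiset.filter_cons_of_neg _ hb, Multiset.filter_add, hfilter, add_zero, hb,
      iff_false, not_lt] using Multiset.card_le_card (Multiset.filter_le _ H)

end Pivot

section PartsWith

/-- The multisets of parts of the partitions of `n` having exactly `k` parts different from `1`. -/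
def partsWith (n k : ℕ) : Set (Multiset ℕ) :=
  {s | (∀ p ∈ s, 0 < p) ∧ s.sum = n ∧ (s.filter (· ≠ 1)).card = k}

theorem parts_mem_partsWith_iff {n k : ℕ} (π : n.Partition) :
    π.parts ∈ partsWith n k ↔ nonOneParts π = k :=
  ⟨fun h => h.2.2, fun h => ⟨fun _ => π.parts_pos, π.parts_sum, h⟩⟩

theorem finite_partsWith (n k : ℕ) : (partsWith n k).Finite :=
  (Set.finite_range (Nat.Partition.parts : n.Partition → Multiset ℕ)).subset
    fun s ⟨hpos, hsum, _⟩ => ⟨⟨s, @hpos, hsum⟩, rfl⟩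

theorem ncard_sep_add_ncard_sep_not (n k : ℕ) (Q : Multiset ℕ → Prop) :
    {s ∈ partsWith n k | Q s}.ncard + {s ∈ partsWith n k | ¬ Q s}.ncard = (partsWith n k).ncard :=
  Set.ncard_inter_add_ncard_sdiff_eq_ncard (partsWith n k) {s | Q s} (finite_partsWith n k)

theorem cons_one_mem_partsWith_iff {n k : ℕ} {s : Multiset ℕ} :
    1 ::ₘ s ∈ partsWith (n + 1) k ↔ s ∈ partsWith n k := by
  simp [partsWith, add_comm 1]

theorem cons_mem_partsWith_iff {n k p : ℕ} (hp : 1 < p) {s : Multiset ℕ} :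
    p ::ₘ s ∈ partsWith (n + p) (k + 1) ↔ s ∈ partsWith n k := by
  simp [partsWith, hp.ne', Nat.zero_lt_of_lt hp, add_comm p]

end PartsWith


section Recurrence

/-- The recurrence shared by the crank and mex conditions: the failures of `Q (j + 1)` among the
partitions of `m` are as many as the instances of `Q j` among the partitions of `m + (j + 1)` with
one more part different from `1`. By `exists_lt`, `Q j` has no instances in the base cases. -/
structure IsComplementary (Q : ℕ → Multiset ℕ → Prop) : Prop where
  exists_lt : ∀ {j s}, Q j s → ∃ p ∈ s, j < p
  ncard_not : ∀ {j}, 0 < j → ∀ m k, {s ∈ partsWith m k | ¬ Q (j + 1) s}.ncard =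
    {s ∈ partsWith (m + (j + 1)) (k + 1) | Q j s}.ncard

namespace IsComplementary

variable {Q R : ℕ → Multiset ℕ → Prop}

theorem sep_eq_empty (hQ : IsComplementary Q) {j n k : ℕ} (hj : 0 < j) (h : k = 0 ∨ n ≤ j) :
    {s ∈ partsWith n k | Q j s} = ∅ := by
  rw [Set.sep_eq_empty_iff_mem_false]
  rintro s ⟨-, rfl, rfl⟩ hs
  obtain ⟨p, hp, hjp⟩ := hQ.exists_lt hs
  have hsum : p ≤ s.sum := Multiset.le_sum_of_mem hp
  have hcard : 0 < (s.filter (· ≠ 1)).card :=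
    Multiset.card_pos_iff_exists_mem.2 ⟨p, Multiset.mem_filter.2 ⟨hp, by omega⟩⟩
  omega

theorem ncard_add_ncard (hQ : IsComplementary Q) {j : ℕ} (hj : 0 < j) (m k : ℕ) :
    {s ∈ partsWith m k | Q (j + 1) s}.ncard +
      {s ∈ partsWith (m + (j + 1)) (k + 1) | Q j s}.ncard = (partsWith m k).ncard := by
  rw [← hQ.ncard_not hj, ncard_sep_add_ncard_sep_not]

theorem ncard_eq (hQ : IsComplementary Q) (hR : IsComplementary R) (k : ℕ) :
    ∀ {j : ℕ}, 0 < j → ∀ n,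
      {s ∈ partsWith n k | Q j s}.ncard = {s ∈ partsWith n k | R j s}.ncard := by
  induction k with
  | zero =>
    intro j hj n
    rw [hQ.sep_eq_empty hj (.inl rfl), hR.sep_eq_empty hj (.inl rfl)]
  | succ k ih =>
    intro j hj n
    rcases le_or_gt n j with hn | hn
    · rw [hQ.sep_eq_empty hj (.inr hn), hR.sep_eq_empty hj (.inr hn)]
    · obtain ⟨m, rfl⟩ : ∃ m, n = m + (j + 1) := Nat.exists_eq_add_of_le' hn
      have hQm := hQ.ncard_add_ncard hj m k
      have hRm := hR.ncard_add_ncard hj m k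
      have := ih (Nat.add_one_pos j) m
      omega

end IsComplementary

end Recurrence

section Mex

theorem bijOn_cons_even_mexAbove {j : ℕ} (hj : 0 < j) (m k : ℕ) :
    Set.BijOn ((j + 1) ::ₘ ·) {s ∈ partsWith m k | ¬ Even (mexAbove (j + 1) s + (j + 1))}
      {s ∈ partsWith (m + (j + 1)) (k + 1) | Even (mexAbove j s + j)} := by
  have hparity (s : Multiset ℕ) : ¬ Even (mexAbove (j + 1) s + (j + 1)) ↔
      Even (mexAbove j ((j + 1) ::ₘ s) + j) := by
    rw [mexAbove_cons_succ, ← add_assoc, Nat.even_add_one, not_not]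
  refine ⟨fun s hs => ?_, fun _ _ _ _ => (Multiset.cons_inj_right _).1, fun s hs => ?_⟩
  · exact ⟨(cons_mem_partsWith_iff (by omega)).2 hs.1, (hparity s).1 hs.2⟩
  · obtain ⟨t, rfl⟩ := Multiset.exists_cons_of_mem (succ_mem_of_even_mexAbove_add hs.2)
    exact ⟨t, ⟨(cons_mem_partsWith_iff (by omega)).1 hs.1, (hparity t).2 hs.2⟩, rfl⟩

theorem isComplementary_even_mexAbove : IsComplementary fun j s => Even (mexAbove j s + j) where
  exists_lt h := ⟨_, succ_mem_of_even_mexAbove_add h, Nat.lt_succ_self _⟩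
  ncard_not hj m k := (bijOn_cons_even_mexAbove hj m k).ncard_eq

end Mex

section AddOnes

variable {s t t' : Multiset ℕ} {i i' : ℕ}

theorem count_one_add_replicate (ht : ∀ p ∈ t, 1 < p) :
    (t + Multiset.replicate i 1).count 1 = i := by
  simp [Multiset.count_eq_zero_of_notMem fun h => (ht 1 h).false]

theorem filter_add_replicate_one {q : ℕ → Prop} [DecidablePred q] (hq : ¬ q 1) :
    (t + Multiset.replicate i 1).filter q = t.filter q := by
  rw [Multiset.filter_add, add_eq_left, Multiset.filter_eq_nil]
  intro p hp
  rwa [Multiset.eq_of_mem_replicate hp]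

theorem filter_ne_one_add_replicate (ht : ∀ p ∈ t, 1 < p) :
    (t + Multiset.replicate i 1).filter (· ≠ 1) = t := by
  rw [filter_add_replicate_one (by simp), Multiset.filter_eq_self]
  exact fun p hp => (ht p hp).ne'

theorem add_replicate_one_inj (ht : ∀ p ∈ t, 1 < p) (ht' : ∀ p ∈ t', 1 < p)
    (h : t + Multiset.replicate i 1 = t' + Multiset.replicate i' 1) : t = t' ∧ i = i' :=
  ⟨by rw [← filter_ne_one_add_replicate ht, h, filter_ne_one_add_replicate ht'],
    by rw [← count_one_add_replicate (i := i) ht, h, count_one_add_replicate ht']⟩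

theorem exists_eq_add_replicate_one (hs : ∀ p ∈ s, 0 < p) :
    ∃ (t : Multiset ℕ) (i : ℕ), (∀ p ∈ t, 1 < p) ∧ s = t + Multiset.replicate i 1 := by
  refine ⟨s.filter (· ≠ 1), s.count 1, fun p hp => ?_, ?_⟩
  · obtain ⟨hps, hp1⟩ := Multiset.mem_filter.1 hp
    have := hs p hps
    omega
  · rw [← Multiset.filter_eq', add_comm, Multiset.filter_add_not]

theorem add_replicate_one_mem_partsWith_iff (ht : ∀ p ∈ t, 1 < p) {n k : ℕ} :
    t + Multiset.replicate i 1 ∈ partsWith n k ↔ t.sum + i = n ∧ t.card = k := by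
  have hpos : ∀ p ∈ t + Multiset.replicate i 1, 0 < p := by
    intro p hp
    rcases Multiset.mem_add.1 hp with hp | hp
    · exact Nat.zero_lt_of_lt (ht p hp)
    · simp [Multiset.eq_of_mem_replicate hp]
  rw [partsWith, Set.mem_ofPred_eq, and_iff_right hpos, filter_ne_one_add_replicate ht,
    Multiset.sum_add, Multiset.sum_replicate, smul_eq_mul, mul_one]

end AddOnes

section Crank

/-- The partition obtained from `s` by adjoining `j > 0` ones has crank greater than `-j`. For
`j = 1` this says that the crank of `1 ::ₘ s` is nonnegative. -/
def CrankGtNeg (j : ℕ) (s : Multiset ℕ) : Prop :=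
  s.count 1 < (s.filter (s.count 1 + j < ·)).card

theorem CrankGtNeg.exists_lt {j : ℕ} {s : Multiset ℕ} (h : CrankGtNeg j s) : ∃ p ∈ s, j < p := by
  obtain ⟨p, hp⟩ := Multiset.card_pos_iff_exists_mem.1 (Nat.zero_lt_of_lt h)
  obtain ⟨hps, hlt⟩ := Multiset.mem_filter.1 hp
  exact ⟨p, hps, (Nat.le_add_left _ _).trans_lt hlt⟩

theorem crankGtNeg_add_replicate_one_iff {j : ℕ} (hj : 0 < j) {t : Multiset ℕ}
    (ht : ∀ p ∈ t, 1 < p) (i : ℕ) :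
    CrankGtNeg j (t + Multiset.replicate i 1) ↔ i < (t.filter (i + j < ·)).card := by
  rw [CrankGtNeg, count_one_add_replicate ht, filter_add_replicate_one (by omega)]

theorem exists_map_succ_eq {H : Multiset ℕ} (hH : ∀ p ∈ H, 0 < p) :
    ∃ U : Multiset ℕ, U.map (· + 1) = H := by
  refine ⟨H.map (· - 1), ?_⟩
  rw [Multiset.map_map]
  exact (Multiset.map_congr rfl fun p hp => Nat.sub_add_cancel (hH p hp)).trans (Multiset.map_id H)

/-- The data from which both sides of the crank recurrence are assembled: parts to be placed
above and below a pivot, which is `ones + j + 1` for a parameter `j`. -/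
@[ext]
structure PivotCut where
  upper : Multiset ℕ
  ones : ℕ
  lower : Multiset ℕ

namespace PivotCut

/-- The conditions on a cut under which `raise` yields a partition of `m` with `k` parts different
from `1`, whose `upper` parts are exactly those exceeding the pivot. -/
structure Admissible (j m k : ℕ) (x : PivotCut) : Prop where
  le_upper : ∀ p ∈ x.upper, x.ones + j + 1 ≤ p
  lower_le : ∀ p ∈ x.lower, p ≤ x.ones + j + 1
  one_lt_lower : ∀ p ∈ x.lower, 1 < p
  card_upper_le : x.upper.card ≤ x.ones
  sum_eq : x.upper.sum + x.upper.card + x.lower.sum + x.ones = m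
  card_eq : x.upper.card + x.lower.card = k

/-- The partition violating the crank condition for `j + 1` that an admissible cut encodes: every
`upper` part is raised by one and the pivot is left out. -/
def raise (x : PivotCut) : Multiset ℕ :=
  x.upper.map (· + 1) + x.lower + Multiset.replicate x.ones 1

/-- The partition satisfying the crank condition for `j` that an admissible cut encodes: the pivot
becomes a part, and the number of ones records its rank among the parts. -/
def insertPivot (j : ℕ) (x : PivotCut) : Multiset ℕ :=
  (x.ones + j + 1) ::ₘ (x.upper + x.lower) + Multiset.replicate x.upper.card 1

variable {j m k : ℕ} {x : PivotCut}

theorem Admissible.one_lt_of_mem_raised (hx : x.Admissible j m k) (hj : 0 < j) :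
    ∀ p ∈ x.upper.map (· + 1) + x.lower, 1 < p := by
  simp only [Multiset.mem_add, Multiset.mem_map]
  rintro _ (⟨q, hq, rfl⟩ | hp)
  · have := hx.le_upper q hq
    omega
  · exact hx.one_lt_lower _ hp

theorem Admissible.one_lt_of_mem_cons (hx : x.Admissible j m k) (hj : 0 < j) :
    ∀ p ∈ (x.ones + j + 1) ::ₘ (x.upper + x.lower), 1 < p := by
  simp only [Multiset.mem_cons, Multiset.mem_add]
  rintro p (rfl | hp | hp)
  · omega
  · have := hx.le_upper p hp
    omega
  · exact hx.one_lt_lower p hp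

theorem Admissible.filter_raised (hx : x.Admissible j m k) :
    (x.upper.map (· + 1) + x.lower).filter (x.ones + (j + 1) < ·) = x.upper.map (· + 1) := by
  rw [Multiset.filter_add, Multiset.filter_eq_self.2, Multiset.filter_eq_nil.2, add_zero]
  · exact fun p hp => (hx.lower_le p hp).not_gt
  · simp only [Multiset.mem_map]
    rintro _ ⟨p, hp, rfl⟩
    exact Nat.lt_succ_of_le (hx.le_upper p hp)

theorem mapsTo_raise (hj : 0 < j) :
    Set.MapsTo raise {x | x.Admissible j m k} {s ∈ partsWith m k | ¬ CrankGtNeg (j + 1) s} := by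
  intro x hx
  have hone := Admissible.one_lt_of_mem_raised hx hj
  refine ⟨(add_replicate_one_mem_partsWith_iff hone).2 ⟨?_, ?_⟩, ?_⟩
  · simpa [Multiset.sum_map_add] using hx.sum_eq
  · simpa using hx.card_eq
  · rw [raise, crankGtNeg_add_replicate_one_iff j.succ_pos hone, hx.filter_raised,
      Multiset.card_map, not_lt]
    exact hx.card_upper_le

theorem injOn_raise (hj : 0 < j) : Set.InjOn raise {x | x.Admissible j m k} := by
  intro x hx y hy h
  obtain ⟨hraised, hones⟩ := add_replicate_one_inj
    (Admissible.one_lt_of_mem_raised hx hj) (Admissible.one_lt_of_mem_raised hy hj) h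
  have hupper : x.upper.map (· + 1) = y.upper.map (· + 1) := by
    rw [← Admissible.filter_raised hx, hraised, hones, Admissible.filter_raised hy]
  rw [hupper] at hraised
  exact PivotCut.ext (Multiset.map_injective (add_left_injective 1) hupper) hones
    (add_left_cancel hraised)

theorem surjOn_raise :
    Set.SurjOn raise {x | x.Admissible j m k} {s ∈ partsWith m k | ¬ CrankGtNeg (j + 1) s} := by
  rintro s ⟨hs, hcrank⟩
  obtain ⟨t, i, ht, rfl⟩ := exists_eq_add_replicate_one hs.1
  obtain ⟨hsum, hcard⟩ := (add_replicate_one_mem_partsWith_iff ht).1 hs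
  rw [crankGtNeg_add_replicate_one_iff j.succ_pos ht, not_lt] at hcrank
  have hmem : ∀ p ∈ t.filter (i + (j + 1) < ·), i + j + 1 < p :=
    fun p hp => (Multiset.mem_filter.1 hp).2
  obtain ⟨U, hU⟩ := exists_map_succ_eq fun p hp => Nat.zero_lt_of_lt (hmem p hp)
  have hsplit : U.map (· + 1) + t.filter (¬ i + (j + 1) < ·) = t := by
    rw [hU, Multiset.filter_add_not]
  refine ⟨⟨U, i, t.filter (¬ i + (j + 1) < ·)⟩, ?_, congrArg (· + _) hsplit⟩
  refine ⟨fun p hp => ?_, fun p hp => ?_, fun p hp => ?_, ?_, ?_, ?_⟩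
  · exact Nat.le_of_lt_succ (hmem _ (hU ▸ Multiset.mem_map_of_mem _ hp))
  · exact not_lt.1 (Multiset.mem_filter.1 hp).2
  · exact ht p (Multiset.mem_filter.1 hp).1
  · rwa [← hU, Multiset.card_map] at hcrank
  · rw [← hsum, ← congrArg Multiset.sum hsplit]
    simp [Multiset.sum_map_add]
  · rw [← hcard, ← congrArg Multiset.card hsplit]
    simp

theorem bijOn_raise (hj : 0 < j) :
    Set.BijOn raise {x | x.Admissible j m k} {s ∈ partsWith m k | ¬ CrankGtNeg (j + 1) s} :=
  ⟨mapsTo_raise hj, injOn_raise hj, surjOn_raise⟩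

theorem mapsTo_insertPivot (hj : 0 < j) :
    Set.MapsTo (insertPivot j) {x | x.Admissible j m k}
      {s ∈ partsWith (m + (j + 1)) (k + 1) | CrankGtNeg j s} := by
  intro x hx
  have hone := Admissible.one_lt_of_mem_cons hx hj
  refine ⟨(add_replicate_one_mem_partsWith_iff hone).2 ⟨?_, ?_⟩, ?_⟩
  · rw [← hx.sum_eq, Multiset.sum_cons, Multiset.sum_add]
    ring
  · rw [← hx.card_eq, Multiset.card_cons, Multiset.card_add]
  · rw [insertPivot, crankGtNeg_add_replicate_one_iff hj hone,
      card_lt_card_filter_cons_add_iff hx.le_upper hx.lower_le]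
    have := hx.card_upper_le
    omega

theorem injOn_insertPivot (hj : 0 < j) :
    Set.InjOn (insertPivot j) {x | x.Admissible j m k} := by
  intro x hx y hy h
  obtain ⟨hparts, hcard⟩ := add_replicate_one_inj
    (Admissible.one_lt_of_mem_cons hx hj) (Admissible.one_lt_of_mem_cons hy hj) h
  obtain ⟨hupper, hpivot, hlower⟩ := cons_add_inj_of_card_eq
    hx.le_upper hx.lower_le hy.le_upper hy.lower_le hcard hparts
  exact PivotCut.ext hupper (by omega) hlower

theorem surjOn_insertPivot (hj : 0 < j) :
    Set.SurjOn (insertPivot j) {x | x.Admissible j m k}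
      {s ∈ partsWith (m + (j + 1)) (k + 1) | CrankGtNeg j s} := by
  rintro s ⟨hs, hcrank⟩
  obtain ⟨t, c, ht, rfl⟩ := exists_eq_add_replicate_one hs.1
  obtain ⟨hsum, hcard⟩ := (add_replicate_one_mem_partsWith_iff ht).1 hs
  rw [crankGtNeg_add_replicate_one_iff hj ht] at hcrank
  obtain ⟨H, L, a, rfl, rfl, hH, hL⟩ := exists_eq_cons_add_of_lt_card
    (hcrank.trans_le (Multiset.card_le_card (Multiset.filter_le _ _)))
  have ha : H.card + j < a := (card_lt_card_filter_cons_add_iff hH hL _).1 hcrank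
  obtain ⟨i, rfl⟩ : ∃ i, a = i + j + 1 := ⟨a - (j + 1), by omega⟩
  simp only [Multiset.sum_cons, Multiset.sum_add, Multiset.card_cons, Multiset.card_add]
    at hsum hcard
  exact ⟨⟨H, i, L⟩, ⟨hH, hL, fun p hp => ht p (by simp [hp]), by dsimp only; omega,
    by dsimp only; omega, by dsimp only; omega⟩, rfl⟩

theorem bijOn_insertPivot (hj : 0 < j) :
    Set.BijOn (insertPivot j) {x | x.Admissible j m k}
      {s ∈ partsWith (m + (j + 1)) (k + 1) | CrankGtNeg j s} :=
  ⟨mapsTo_insertPivot hj, injOn_insertPivot hj, surjOn_insertPivot hj⟩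

end PivotCut

theorem isComplementary_crankGtNeg : IsComplementary CrankGtNeg where
  exists_lt := CrankGtNeg.exists_lt
  ncard_not hj _ _ :=
    (PivotCut.bijOn_raise hj).ncard_eq.symm.trans (PivotCut.bijOn_insertPivot hj).ncard_eq

end Crank

section RemoveOne

theorem bijOn_erase_one {m k : ℕ} {P : (m + 1).Partition → Prop} {Q : Multiset ℕ → Prop}
    (hPQ : ∀ π s, π.parts = 1 ::ₘ s → (P π ↔ Q s)) :
    Set.BijOn (fun π : (m + 1).Partition => π.parts.erase 1)
      {π | (P π ∧ nonOneParts π = k) ∧ 1 ∈ π.parts} {s ∈ partsWith m k | Q s} := by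
  refine ⟨?_, ?_, ?_⟩
  · rintro π ⟨⟨hP, hk⟩, h1⟩
    have hparts := (Multiset.cons_erase h1).symm
    refine ⟨?_, (hPQ π _ hparts).1 hP⟩
    rwa [← cons_one_mem_partsWith_iff, ← hparts, parts_mem_partsWith_iff]
  · rintro π ⟨-, hπ⟩ ρ ⟨-, hρ⟩ h
    exact Nat.Partition.ext (by
      rw [← Multiset.cons_erase hπ, ← Multiset.cons_erase hρ]; exact congrArg (1 ::ₘ ·) h)
  · rintro s ⟨hs, hQ⟩
    obtain ⟨hpos, hsum, hk⟩ := cons_one_mem_partsWith_iff.2 hs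
    exact ⟨⟨1 ::ₘ s, @hpos, hsum⟩, ⟨⟨(hPQ _ s rfl).2 hQ, hk⟩, Multiset.mem_cons_self 1 s⟩,
      Multiset.erase_cons_head 1 s⟩

theorem card_partition_eq_add_ncard (m k : ℕ) (P : (m + 1).Partition → Prop) [DecidablePred P]
    (Q : Multiset ℕ → Prop) (hP : ∀ π, 1 ∉ π.parts → P π)
    (hPQ : ∀ π s, π.parts = 1 ::ₘ s → (P π ↔ Q s)) :
    (Finset.univ.filter (fun π => P π ∧ nonOneParts π = k)).card =
      (Finset.univ.filter
        (fun π : (m + 1).Partition => nonOneParts π = k ∧ 1 ∉ π.parts)).card +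
      {s ∈ partsWith m k | Q s}.ncard := by
  have hno : (Finset.univ.filter fun π => P π ∧ nonOneParts π = k).filter (1 ∉ ·.parts) =
      Finset.univ.filter fun π => nonOneParts π = k ∧ 1 ∉ π.parts := by
    rw [Finset.filter_filter]
    exact Finset.filter_congr fun π _ => ⟨fun h => ⟨h.1.2, h.2⟩, fun h => ⟨⟨hP π h.2, h.1⟩, h.2⟩⟩
  have hone : ((Finset.univ.filter fun π => P π ∧ nonOneParts π = k).filter
      (¬ 1 ∉ ·.parts)).card = {s ∈ partsWith m k | Q s}.ncard := by
    rw [← (bijOn_erase_one hPQ).ncard_eq, ← Set.ncard_coe_finset]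
    simp
  rw [← hno, ← hone, Finset.card_filter_add_card_filter_not]

theorem partitionCrank_nonneg_of_one_notMem {n : ℕ} {π : n.Partition} (h : 1 ∉ π.parts) :
    0 ≤ partitionCrank π := by
  simp [partitionCrank, partitionOmega, Multiset.count_eq_zero_of_notMem h]

theorem partitionCrank_nonneg_iff_of_parts_eq_cons {n : ℕ} {π : n.Partition} {s : Multiset ℕ}
    (h : π.parts = 1 ::ₘ s) : 0 ≤ partitionCrank π ↔ CrankGtNeg 1 s := by
  have hω : partitionOmega π = s.count 1 + 1 := by rw [partitionOmega, h, Multiset.count_cons_self]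
  have hη : partitionEta π = (s.filter (s.count 1 + 1 < ·)).card := by
    rw [partitionEta, hω, h, Multiset.filter_cons_of_neg _ (by omega)]
  rw [partitionCrank, if_neg (by omega), hω, hη, CrankGtNeg]
  omega

theorem odd_partitionMex_of_one_notMem {n : ℕ} {π : n.Partition} (h : 1 ∉ π.parts) :
    Odd (partitionMex π) := by
  rw [partitionMex_eq_mexAbove, mexAbove_of_succ_notMem h]
  exact odd_one

theorem odd_partitionMex_iff_of_parts_eq_cons {n : ℕ} {π : n.Partition} {s : Multiset ℕ}
    (h : π.parts = 1 ::ₘ s) : Odd (partitionMex π) ↔ Even (mexAbove 1 s + 1) := by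
  rw [partitionMex_eq_mexAbove, h, mexAbove_cons_succ, Nat.even_add_one, Nat.not_even_iff_odd]

end RemoveOne

theorem crank_mex_refined (n : ℕ) (hn : 0 < n) (k : ℕ) :
    (Finset.univ.filter
      (fun π : n.Partition => 0 ≤ partitionCrank π ∧ nonOneParts π = k)).card =
    (Finset.univ.filter
      (fun π : n.Partition => Odd (partitionMex π) ∧ nonOneParts π = k)).card := by
  obtain ⟨m, rfl⟩ := Nat.exists_eq_add_one.2 hn
  rw [card_partition_eq_add_ncard m k _ (CrankGtNeg 1)
      (fun _ => partitionCrank_nonneg_of_one_notMem)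
      (fun _ _ => partitionCrank_nonneg_iff_of_parts_eq_cons),
    card_partition_eq_add_ncard m k _ (fun s => Even (mexAbove 1 s + 1))
      (fun _ => odd_partitionMex_of_one_notMem) (fun _ _ => odd_partitionMex_iff_of_parts_eq_cons),
    isComplementary_crankGtNeg.ncard_eq isComplementary_even_mexAbove k one_pos m]
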